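/- Suppose m, θ, g are C¹ functions on a simply connected open subset of the (ξ,t)-plane satisfying the 2-D KCL: (g sin θ)_t + (m cos θ)_ξ = 0 and (g cos θ)_t - (m sin θ)_ξ = 0. Then there exists a C² map (x,y) of (ξ,t) such that (x_t, y_t) = m (cos θ, sin θ) and (x_ξ, y_ξ) = g (-sin θ, cos θ). -/

import Mathlib

/-!
The conservation laws say that the `1`-forms `-g sin θ dξ + m cos θ dt` and
`g cos θ dξ + m sin θ dt` are closed, so `x` and `y` are primitives of them. A closed form has
primitives on balls, and two of them differ by a locally constant function where both are defined.
Hence the germs of primitives form a covering space of the domain, with the additive group of values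
as discrete fibre. Over a simply connected domain this covering has a section, which is a global
primitive.
-/

open Bundle Filter Metric Set Topology

open scoped ContDiff

section Gluing

theorem exists_continuous_section_of_discrete_fiber {X F : Type*} {E : X → Type*}
    [TopologicalSpace X] [SimplyConnectedSpace X] [LocallyPathConnectedSpace X]
    [TopologicalSpace F] [DiscreteTopology F] [∀ x, TopologicalSpace (E x)]
    [TopologicalSpace (TotalSpace F E)] [FiberBundle F E] (x₀ : X) (v₀ : E x₀) :
    ∃ σ : ∀ x, E x, Continuous (fun x => TotalSpace.mk' F x (σ x)) ∧ σ x₀ = v₀ := by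
  have hcov : IsCoveringMap (π F E) := FiberBundle.isCoveringMap
  obtain ⟨Φ, ⟨hΦ₀, hΦ⟩, -⟩ :=
    hcov.existsUnique_continuousMap_lifts (ContinuousMap.id X) x₀ ⟨x₀, v₀⟩ rfl
  choose σ hσ using fun x => show ∃ v : E x, (⟨x, v⟩ : TotalSpace F E) = Φ x by
    have hproj : (Φ x).proj = x := congrFun hΦ x
    exact ⟨hproj ▸ (Φ x).2, by ext <;> simp [hproj]⟩
  refine ⟨σ, (map_continuous Φ).congr fun x => (hσ x).symm, ?_⟩
  exact TotalSpace.mk_injective x₀ ((hσ x₀).trans hΦ₀)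

theorem continuousAt_iff_eventuallyConst {X A : Type*} [TopologicalSpace X] [TopologicalSpace A]
    [DiscreteTopology A] {f : X → A} {x : X} : ContinuousAt f x ↔ EventuallyConst f (𝓝 x) := by
  rw [ContinuousAt, nhds_discrete A]
  refine ⟨.of_tendsto, fun hf => ?_⟩
  have : Nonempty A := ⟨f x⟩
  obtain ⟨c, hc⟩ := hf.eventuallyEq_const
  rw [hc.eq_of_nhds, tendsto_pure]
  exact hc

variable {ι X A : Type*} [TopologicalSpace X] [AddGroup A] {U : ι → Set X} {f : ι → X → A}

/-- The bundle of germs of functions that differ from the local functions `f i : U i → A` by a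
constant. In the chart `U i`, the vector `v` over `x` stands for the germ of `v + f i` at `x`. The
fibre is discrete, so that a continuous section is a function differing from each `f i` by a locally
constant one. The map `c` selects the chart used to identify the fibre over each point with `A`. -/
def gluingBundleCore [TopologicalSpace A] [DiscreteTopology A] (hUo : ∀ i, IsOpen (U i))
    (c : X → ι) (hc : ∀ x, x ∈ U (c x))
    (hf : ∀ i j, ∀ x ∈ U i ∩ U j, EventuallyConst (f i - f j) (𝓝 x)) : FiberBundleCore ι X A where
  baseSet := U
  isOpen_baseSet := hUo
  indexAt := c
  mem_baseSet_at := hc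
  coordChange i j x v := v + (f i - f j) x
  coordChange_self i x _ v := by simp
  continuousOn_coordChange i j := by
    rintro ⟨x, v⟩ ⟨hx, -⟩
    have hconst : ContinuousAt (f i - f j) x := continuousAt_iff_eventuallyConst.2 (hf i j x hx)
    exact (continuousAt_snd.add (hconst.comp continuousAt_fst)).continuousWithinAt
  coordChange_comp i j k x _ v := by simp [add_assoc]

theorem eventuallyConst_sub_of_continuous_section [TopologicalSpace A] [DiscreteTopology A]
    {hUo : ∀ i, IsOpen (U i)} {c : X → ι} {hc : ∀ x, x ∈ U (c x)}
    {hf : ∀ i j, ∀ x ∈ U i ∩ U j, EventuallyConst (f i - f j) (𝓝 x)} {σ : X → A}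
    (hσ : Continuous fun x => (⟨x, σ x⟩ : (gluingBundleCore hUo c hc hf).TotalSpace))
    {i : ι} {x : X} (hx : x ∈ U i) :
    EventuallyConst ((fun y => σ y + f (c y) y) - f i) (𝓝 x) := by
  let Z := gluingBundleCore hUo c hc hf
  have hsource : (⟨x, σ x⟩ : Z.TotalSpace) ∈ (Z.localTriv i).source :=
    (Z.mem_localTriv_source i _).2 hx
  have hchart : ContinuousAt (fun y => (Z.localTriv i ⟨y, σ y⟩).2) x :=
    ((Z.localTriv i).continuousAt hsource).snd.comp (f := fun y => (⟨y, σ y⟩ : Z.TotalSpace))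
      hσ.continuousAt
  refine (continuousAt_iff_eventuallyConst.1 hchart).congr (.of_forall fun y => ?_)
  exact (add_sub_assoc (σ y) (f (c y) y) (f i y)).symm

theorem exists_forall_eventuallyConst_sub [SimplyConnectedSpace X] [LocallyPathConnectedSpace X]
    (hUo : ∀ i, IsOpen (U i)) (hU : ∀ x, ∃ i, x ∈ U i)
    (hf : ∀ i j, ∀ x ∈ U i ∩ U j, EventuallyConst (f i - f j) (𝓝 x)) :
    ∃ h : X → A, ∀ i, ∀ x ∈ U i, EventuallyConst (h - f i) (𝓝 x) := by
  let _ : TopologicalSpace A := ⊥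
  have : DiscreteTopology A := ⟨rfl⟩
  choose c hc using hU
  let Z := gluingBundleCore hUo c hc hf
  obtain ⟨x₀⟩ : Nonempty X := inferInstance
  obtain ⟨σ : X → A, hσ, -⟩ :=
    exists_continuous_section_of_discrete_fiber (F := A) (E := Z.Fiber) x₀ (0 : A)
  exact ⟨fun x => σ x + f (c x) x, fun i x hx => eventuallyConst_sub_of_continuous_section hσ hx⟩

theorem exists_forall_eventuallyConst_sub_of_isSimplyConnected {s : Set X}
    [LocallyPathConnectedSpace X] (hsc : IsSimplyConnected s) (hs : IsOpen s)
    (hUo : ∀ i, IsOpen (U i)) (hU : s ⊆ ⋃ i, U i)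
    (hf : ∀ i j, ∀ x ∈ U i ∩ U j, EventuallyConst (f i - f j) (𝓝 x)) :
    ∃ h : X → A, ∀ i, ∀ x ∈ s ∩ U i, EventuallyConst (h - f i) (𝓝 x) := by
  have := hsc.simplyConnectedSpace
  have := hs.locallyPathConnectedSpace
  have eventuallyConst_iff (k : X → A) (x : s) :
      EventuallyConst k (𝓝 (x : X)) ↔ EventuallyConst (k ∘ Subtype.val) (𝓝 x) := by
    rw [EventuallyConst, EventuallyConst, ← map_map, hs.isOpenEmbedding_subtypeVal.map_nhds_eq]
  obtain ⟨h, hh⟩ := exists_forall_eventuallyConst_sub (X := s) (U := fun i => Subtype.val ⁻¹' U i)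
    (f := fun i => f i ∘ Subtype.val) (fun i => (hUo i).preimage continuous_subtype_val)
    (fun x => by simpa using hU x.2) fun i j x hx => (eventuallyConst_iff _ x).1 (hf i j x hx)
  refine ⟨Function.extend Subtype.val h 0, ?_⟩
  rintro i x ⟨hxs, hxi⟩
  have hextend : Function.extend Subtype.val h 0 ∘ Subtype.val = h :=
    Function.extend_comp Subtype.val_injective h 0
  simpa only [eventuallyConst_iff _ ⟨x, hxs⟩, Pi.sub_comp, hextend] using hh i ⟨x, hxs⟩ hxi

end Gluing

section Poincare

variable {𝕜 E F : Type*} [RCLike 𝕜] [NormedAddCommGroup E] [NormedSpace 𝕜 E]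
  [NormedAddCommGroup F] [NormedSpace 𝕜 F]

theorem eventuallyConst_of_eventually_hasFDerivAt_zero {f : E → F} {x : E}
    (hf : ∀ᶠ y in 𝓝 x, HasFDerivAt f (0 : E →L[𝕜] F) y) : EventuallyConst f (𝓝 x) := by
  let _ : NormedSpace ℝ E := .restrictScalars ℝ 𝕜 E
  obtain ⟨r, hr, hball⟩ := Metric.eventually_nhds_iff_ball.1 hf
  refine (nhds_basis_ball.eventuallyConst_iff' fun _ => mem_ball_self).2 ⟨r, hr, fun y hy => ?_⟩
  exact isOpen_ball.is_const_of_fderiv_eq_zero (convex_ball x r).isPreconnected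
    (fun a ha => (hball a ha).differentiableAt.differentiableWithinAt)
    (fun a ha => (hball a ha).fderiv) hy (mem_ball_self hr)

variable [NormedSpace ℝ E] [NormedSpace ℝ F] [CompleteSpace F] {s : Set E} {η : E → E →L[𝕜] F}

theorem exists_forall_hasFDerivAt_of_isSimplyConnected (hsc : IsSimplyConnected s) (hs : IsOpen s)
    (hη : DifferentiableOn ℝ η s)
    (hdη : ∀ a ∈ s, ∀ u v, fderiv ℝ η a u v = fderiv ℝ η a v u) :
    ∃ f : E → F, ∀ a ∈ s, HasFDerivAt f (η a) a := by
  have exists_local (x : s) :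
      ∃ r > 0, ∃ f : E → F, ∀ a ∈ ball (x : E) r, HasFDerivAt f (η a) a := by
    obtain ⟨r, hr, hrs⟩ := Metric.isOpen_iff.1 hs x x.2
    exact ⟨r, hr, (convex_ball _ r).exists_forall_hasFDerivAt_of_fderiv_symmetric isOpen_ball
      (hη.mono hrs) fun a ha => hdη a (hrs ha)⟩
  choose r hr f hf using exists_local
  have hcover : s ⊆ ⋃ x : s, ball (x : E) (r x) := fun x hx =>
    mem_iUnion.2 ⟨⟨x, hx⟩, mem_ball_self (hr _)⟩
  obtain ⟨h, hh⟩ := exists_forall_eventuallyConst_sub_of_isSimplyConnected hsc hs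
    (fun _ => isOpen_ball) hcover (f := f) fun i j x hx => by
      refine eventuallyConst_of_eventually_hasFDerivAt_zero (𝕜 := 𝕜) ?_
      filter_upwards [(isOpen_ball.inter isOpen_ball).mem_nhds hx] with y hy
      simpa using (hf i y hy.1).sub (hf j y hy.2)
  refine ⟨h, fun a ha => ?_⟩
  have ha' : a ∈ ball a (r ⟨a, ha⟩) := mem_ball_self (hr _)
  obtain ⟨k, hk⟩ := (hh ⟨a, ha⟩ a ⟨ha, ha'⟩).eventuallyEq_const
  refine ((hf ⟨a, ha⟩ a ha').const_add k).congr_of_eventuallyEq ?_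
  filter_upwards [hk] with y hy
  exact sub_eq_iff_eq_add.1 hy

end Poincare

section Plane

variable {𝕜 F : Type*} [NontriviallyNormedField 𝕜] [NormedAddCommGroup F] [NormedSpace 𝕜 F]

theorem contDiffOn_add_one_of_hasFDerivAt {E : Type*} [NormedAddCommGroup E] [NormedSpace 𝕜 E]
    {s : Set E} (hs : IsOpen s) {n : ℕ∞ω} (hn : n ≠ ω) {f : E → F}
    {f' : E → E →L[𝕜] F} (hf' : ContDiffOn 𝕜 n f' s)
    (hf : ∀ x ∈ s, HasFDerivAt f (f' x) x) : ContDiffOn 𝕜 (n + 1) f s :=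
  (contDiffOn_succ_iff_hasFDerivWithinAt_of_uniqueDiffOn hs.uniqueDiffOn).2
    ⟨fun h => absurd h hn, f', hf', fun x hx => (hf x hx).hasFDerivWithinAt⟩

theorem apply_apply_comm_of_apply_basis_comm {B : 𝕜 × 𝕜 →L[𝕜] 𝕜 × 𝕜 →L[𝕜] F}
    (hB : B (1, 0) (0, 1) = B (0, 1) (1, 0)) (u v : 𝕜 × 𝕜) : B u v = B v u := by
  have decomp (w : 𝕜 × 𝕜) : w = w.1 • ((1, 0) : 𝕜 × 𝕜) + w.2 • ((0, 1) : 𝕜 × 𝕜) := by ext <;> simp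
  rw [decomp u, decomp v]
  simp only [map_add, map_smul, add_apply, smul_apply, hB]
  module

/-- The `1`-form `a dξ + b dt` on the `(ξ, t)`-plane, as a field of `F`-valued linear maps. -/
def planeForm (a b : 𝕜 × 𝕜 → F) (p : 𝕜 × 𝕜) : 𝕜 × 𝕜 →L[𝕜] F :=
  (ContinuousLinearMap.fst 𝕜 𝕜 𝕜).smulRight (a p) + (ContinuousLinearMap.snd 𝕜 𝕜 𝕜).smulRight (b p)

variable {a b : 𝕜 × 𝕜 → F}

theorem planeForm_apply (p v : 𝕜 × 𝕜) : planeForm a b p v = v.1 • a p + v.2 • b p := rfl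

theorem contDiffOn_planeForm {s : Set (𝕜 × 𝕜)} {n : ℕ∞ω} (ha : ContDiffOn 𝕜 n a s)
    (hb : ContDiffOn 𝕜 n b s) : ContDiffOn 𝕜 n (planeForm a b) s :=
  (contDiffOn_const.smulRight ha).add (contDiffOn_const.smulRight hb)

theorem fderiv_planeForm_apply_comm {p : 𝕜 × 𝕜} (h : DifferentiableAt 𝕜 (planeForm a b) p)
    (hab : fderiv 𝕜 a p (0, 1) = fderiv 𝕜 b p (1, 0)) (u v : 𝕜 × 𝕜) :
    fderiv 𝕜 (planeForm a b) p u v = fderiv 𝕜 (planeForm a b) p v u := by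
  have fderiv_apply (u v : 𝕜 × 𝕜) :
      fderiv 𝕜 (planeForm a b) p u v = fderiv 𝕜 (fun q => planeForm a b q v) p u := by
    rw [fderiv_clm_apply h (differentiableAt_const v)]
    simp
  refine apply_apply_comm_of_apply_basis_comm ?_ u v
  simpa [fderiv_apply, planeForm_apply] using hab.symm

theorem exists_contDiffOn_potential_of_isSimplyConnected {F : Type*} [NormedAddCommGroup F]
    [NormedSpace ℝ F] [CompleteSpace F] {a b : ℝ × ℝ → F} {s : Set (ℝ × ℝ)}
    (hsc : IsSimplyConnected s) (hs : IsOpen s) {n : ℕ∞ω} (hn₀ : n ≠ 0) (hn : n ≠ ω)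
    (ha : ContDiffOn ℝ n a s) (hb : ContDiffOn ℝ n b s)
    (hab : ∀ p ∈ s, fderiv ℝ a p (0, 1) = fderiv ℝ b p (1, 0)) :
    ∃ f : ℝ × ℝ → F, ContDiffOn ℝ (n + 1) f s ∧
      ∀ p ∈ s, fderiv ℝ f p (1, 0) = a p ∧ fderiv ℝ f p (0, 1) = b p := by
  have hη := contDiffOn_planeForm ha hb
  have hηd := hη.differentiableOn hn₀
  obtain ⟨f, hf⟩ := exists_forall_hasFDerivAt_of_isSimplyConnected hsc hs hηd fun p hp =>
    fderiv_planeForm_apply_comm (hηd.differentiableAt (hs.mem_nhds hp)) (hab p hp)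
  refine ⟨f, contDiffOn_add_one_of_hasFDerivAt hs hn hη hf, fun p hp => ?_⟩
  simp [(hf p hp).fderiv, planeForm_apply]

end Plane

/-- On a simply connected open subset of the `(ξ, t)`-plane, C¹ solutions
`m, θ, g` of the 2-D KCL admit a C² potential map `(x, y)` with
`(x_t, y_t) = m (cos θ, sin θ)` and `(x_ξ, y_ξ) = g (-sin θ, cos θ)`. -/
theorem kcl_implies_ray_map
    (s : Set (ℝ × ℝ)) (hs : IsOpen s) (hsc : SimplyConnectedSpace s)
    (m θ g : ℝ × ℝ → ℝ)
    (hm : ContDiffOn ℝ 1 m s) (hθ : ContDiffOn ℝ 1 θ s) (hg : ContDiffOn ℝ 1 g s)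
    (hkcl₁ : ∀ p ∈ s,
        fderiv ℝ (fun q => g q * Real.sin (θ q)) p (0, 1)
          + fderiv ℝ (fun q => m q * Real.cos (θ q)) p (1, 0) = 0)
    (hkcl₂ : ∀ p ∈ s,
        fderiv ℝ (fun q => g q * Real.cos (θ q)) p (0, 1)
          - fderiv ℝ (fun q => m q * Real.sin (θ q)) p (1, 0) = 0) :
    ∃ x y : ℝ × ℝ → ℝ, ContDiffOn ℝ 2 x s ∧ ContDiffOn ℝ 2 y s ∧
      ∀ p ∈ s,
        fderiv ℝ x p (0, 1) = m p * Real.cos (θ p) ∧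
        fderiv ℝ y p (0, 1) = m p * Real.sin (θ p) ∧
        fderiv ℝ x p (1, 0) = -(g p) * Real.sin (θ p) ∧
        fderiv ℝ y p (1, 0) = g p * Real.cos (θ p) := by
  have hsin : ContDiffOn ℝ 1 (fun q => Real.sin (θ q)) s := hθ.sin
  have hcos : ContDiffOn ℝ 1 (fun q => Real.cos (θ q)) s := hθ.cos
  have closed_x (p) (hp : p ∈ s) :
      fderiv ℝ (fun q => -(g q * Real.sin (θ q))) p (0, 1) =
        fderiv ℝ (fun q => m q * Real.cos (θ q)) p (1, 0) := by
    rw [fderiv_fun_neg, neg_apply]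
    exact neg_eq_of_add_eq_zero_right (hkcl₁ p hp)
  have closed_y (p) (hp : p ∈ s) :
      fderiv ℝ (fun q => g q * Real.cos (θ q)) p (0, 1) =
        fderiv ℝ (fun q => m q * Real.sin (θ q)) p (1, 0) := sub_eq_zero.1 (hkcl₂ p hp)
  obtain ⟨x, hx, hdx⟩ := exists_contDiffOn_potential_of_isSimplyConnected hsc hs one_ne_zero
    (by simp) (hg.mul hsin).neg (hm.mul hcos) closed_x
  obtain ⟨y, hy, hdy⟩ := exists_contDiffOn_potential_of_isSimplyConnected hsc hs one_ne_zero
    (by simp) (hg.mul hcos) (hm.mul hsin) closed_y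
  rw [one_add_one_eq_two] at hx hy
  refine ⟨x, y, hx, hy, fun p hp => ⟨(hdx p hp).2, (hdy p hp).2, ?_, (hdy p hp).1⟩⟩
  rw [(hdx p hp).1, neg_mul]
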